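/- Let Q be a well-formed formula, let M be a Q-consistent extension of the implicational propositional calculus, and let A be a wf. If QQA is not a theorem of M, then the extension N of M obtained by adding QA as an extra axiom is Q-consistent. -/

import Mathlib

/-- Well-formed formulas of the implicational propositional calculus:
propositional variables (indexed by ℕ, so the set of wfs is countable)
and the single connective ⊃. -/
inductive Wf where
  | var : ℕ → Wf
  | imp : Wf → Wf → Wf
deriving DecidableEq

infixr:60 " ⊃' " => Wf.imp

/-- `Deduces Γ A` : `A` is deducible from the set `Γ` of extra axioms/hypotheses,
using the three axiom schemes of IPC (including the Peirce scheme) and modus ponens.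
Theorems of IPC are `Deduces ∅ A`; for an extension `M` of IPC with extra-axiom
set `E`, `T(M)` is `Deduces E`, and deducibility from hypotheses `Γ` in `M` is
`Deduces (E ∪ Γ)`. -/
inductive Deduces : Set Wf → Wf → Prop where
  | hyp : ∀ {Γ : Set Wf} {A : Wf}, A ∈ Γ → Deduces Γ A
  | ax1 : ∀ {Γ : Set Wf} (A B : Wf), Deduces Γ (A ⊃' (B ⊃' A))
  | ax2 : ∀ {Γ : Set Wf} (A B C : Wf),
      Deduces Γ ((A ⊃' (B ⊃' C)) ⊃' ((A ⊃' B) ⊃' (A ⊃' C)))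
  | peirce : ∀ {Γ : Set Wf} (A B : Wf), Deduces Γ (((A ⊃' B) ⊃' A) ⊃' A)
  | mp : ∀ {Γ : Set Wf} {A B : Wf}, Deduces Γ (A ⊃' B) → Deduces Γ A → Deduces Γ B

namespace Deduces

variable {Γ : Set Wf} {A B C : Wf}

theorem imp_of_right (A : Wf) (hB : Deduces Γ B) : Deduces Γ (A ⊃' B) :=
  .mp (.ax1 B A) hB

theorem imp_mp (hBC : Deduces Γ (A ⊃' (B ⊃' C))) (hB : Deduces Γ (A ⊃' B)) :
    Deduces Γ (A ⊃' C) :=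
  .mp (.mp (.ax2 A B C) hBC) hB

theorem imp_self (A : Wf) : Deduces Γ (A ⊃' A) :=
  imp_mp (.ax1 A (A ⊃' A)) (.ax1 A A)

theorem deduction_theorem (hB : Deduces (insert A Γ) B) : Deduces Γ (A ⊃' B) := by
  induction hB with
  | hyp hmem =>
    obtain rfl | hmem := hmem
    · exact imp_self _
    · exact imp_of_right A (.hyp hmem)
  | ax1 X Y => exact imp_of_right A (.ax1 X Y)
  | ax2 X Y Z => exact imp_of_right A (.ax2 X Y Z)
  | peirce X Y => exact imp_of_right A (.peirce X Y)
  | mp _ _ ih_imp ih => exact imp_mp ih_imp ih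

end Deduces

/-- Theorem 3: if M (extra axioms E) is a Q-consistent extension of IPC and
QQA is not a theorem of M, then the extension N of M obtained by adding QA
as an extra axiom is Q-consistent. -/
theorem stmt_11 (Q A : Wf) (E : Set Wf)
    (hcons : ¬ Deduces E Q)
    (h : ¬ Deduces E (((A ⊃' Q) ⊃' Q))) :
    ¬ Deduces (insert (A ⊃' Q) E) Q :=
  fun hQ => h hQ.deduction_theorem
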